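/- Let (C_k)_{k∈ℕ} be a sequence of d-dimensional copulas and C_∞ a function on [0,1]^d for which the third order condition holds with auxiliary functions φ (regularly varying of index ρ_φ < 0), ψ (regularly varying of index ρ_ψ < 0) and limit functions S, T. Fix u ∈ [0,1]^d with S(u) ≠ 0 and a > 0 with a ≠ 1. Then for all sufficiently large m the quantity R_m := (C_{⌊m a²⌋}(u) − C_m(u)) / (C_{⌊ma⌋}(u) − C_m(u)) − 1 is strictly positive, and the deterministic bias of the naive second-order-parameter estimator satisfies log_a(R_m) − ρ_φ = ψ(m) · (T(u)/S(u)) · (a^{ρ_φ + ρ_ψ} − 1)(a^{ρ_ψ} − 1) / ((a^{ρ_φ} − 1) · log a) + O( r_{a²}(m) + r_a(m) + m^{−1} ) + o(ψ(m)) as m → ∞, where log_a denotes the base-a logarithm. -/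

import Mathlib

/-!
Fix `u` and write `s = S u`, `t = T u`, `A = a ^ ρφ`, `B = a ^ ρψ`. The third order condition says
`C k u - Cinf u = φ k * (s + ψ k * τ k)` with `τ k → t`. Dividing by `s * φ m`, the increment
`C ⌊m b⌋ u - C m u` becomes `y = p - 1 + ψ m * x` with `p = φ ⌊m b⌋ / φ m → b ^ ρφ` and
`x → (t / s) * (b ^ ρφ * b ^ ρψ - 1)`. Writing `y₁, y₂` for `b = a` and `b = a ^ 2`, the quantity of
interest is `R = y₂ / y₁ - 1 → A`, and

`R / A - 1 = (e + ψ m * X) / (A * y₁)`,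
`e = (p₂ - A ^ 2) - (1 + A) * (p₁ - A)`,  `X = x₂ - (1 + A) * x₁ → (t / s) * A * (A B - 1) * (B - 1)`.

Since `log r = (r - 1) * (1 + o(1))` as `r → 1`, taking `log_a` gives the expansion: the term from `X`
is the main term plus `o(ψ m)`, and the term from `e` is `O(r_{a²}(m) + r_a(m) + 1 / m)`, because
`b ^ ρφ - (⌊m b⌋ / m) ^ ρφ = O(1 / m)` by differentiability of `x ↦ x ^ ρφ` at `b > 0`.

That `ψ → 0` does not require the theory of regularly varying sequences: at a point where `T ≠ 0` the
second order condition reads `ψ k * (T + o(1)) → 0` once the third is inserted.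
-/

open MeasureTheory Filter Set

noncomputable section

/-- The closed unit cube `[0,1]^d` in `ℝ^d`. -/
def unitBox (d : ℕ) : Set (Fin d → ℝ) := {u | ∀ j, u j ∈ Set.Icc (0:ℝ) 1}

/-- `C` is (the restriction to `[0,1]^d` of) the distribution function of a Borel probability
measure concentrated on `[0,1]^d` whose one-dimensional margins are uniform on `[0,1]`. -/
def IsCopula {d : ℕ} (C : (Fin d → ℝ) → ℝ) : Prop :=
  ∃ μ : Measure (Fin d → ℝ), IsProbabilityMeasure μ ∧
    μ (unitBox d)ᶜ = 0 ∧
    (∀ u ∈ unitBox d, C u = (μ {x | ∀ j, x j ≤ u j}).toReal) ∧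
    (∀ j : Fin d, ∀ t ∈ Set.Icc (0:ℝ) 1, (μ {x | x j ≤ t}).toReal = t)

/-- `φ` is regularly varying (along the integers) with index `ρ`. -/
def RegVar (φ : ℕ → ℝ) (ρ : ℝ) : Prop :=
  ∀ x : ℝ, 0 < x → Tendsto (fun k : ℕ => φ ⌊x * (k:ℝ)⌋₊ / φ k) atTop (nhds (x ^ ρ))

/-- The second order condition: `sup_u |C_m(u) − C_∞(u) − φ(m) S(u)| = o(φ(m))` with `φ`
regularly varying of negative index and `S` continuous and not identically zero. -/
def SecondOrderCond {d : ℕ} (C : ℕ → (Fin d → ℝ) → ℝ) (Cinf : (Fin d → ℝ) → ℝ)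
    (φ : ℕ → ℝ) (ρφ : ℝ) (S : (Fin d → ℝ) → ℝ) : Prop :=
  (∀ m, 0 < φ m) ∧ ρφ < 0 ∧ RegVar φ ρφ ∧
  ContinuousOn S (unitBox d) ∧ (∃ u ∈ unitBox d, S u ≠ 0) ∧
  TendstoUniformlyOn (fun m u => (C m u - Cinf u) / φ m) S atTop (unitBox d)

/-- The third order condition: on top of the second order condition,
`sup_u |C_k(u) − C_∞(u) − φ(k) S(u) − φ(k) ψ(k) T(u)| = o(φ(k) ψ(k))` with `ψ`
regularly varying of negative index and `T` continuous, not identically zero and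
not a multiple of `S`. -/
def ThirdOrderCond {d : ℕ} (C : ℕ → (Fin d → ℝ) → ℝ) (Cinf : (Fin d → ℝ) → ℝ)
    (φ : ℕ → ℝ) (ρφ : ℝ) (S : (Fin d → ℝ) → ℝ)
    (ψ : ℕ → ℝ) (ρψ : ℝ) (T : (Fin d → ℝ) → ℝ) : Prop :=
  SecondOrderCond C Cinf φ ρφ S ∧
  (∀ k, 0 < ψ k) ∧ ρψ < 0 ∧ RegVar ψ ρψ ∧
  ContinuousOn T (unitBox d) ∧ (∃ u ∈ unitBox d, T u ≠ 0) ∧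
  (∀ c : ℝ, ∃ u ∈ unitBox d, T u ≠ c * S u) ∧
  TendstoUniformlyOn (fun k u => (C k u - Cinf u - φ k * S u) / (φ k * ψ k)) T atTop (unitBox d)

/-- `r_a(m) := (⌊ma⌋/m)^{ρ_φ} − φ(⌊ma⌋)/φ(m)`. -/
def raf (φ : ℕ → ℝ) (ρφ : ℝ) (a : ℝ) (m : ℕ) : ℝ :=
  ((⌊(m:ℝ) * a⌋₊ : ℝ) / m) ^ ρφ - φ ⌊(m:ℝ) * a⌋₊ / φ m

/-- Comparing the second and third order conditions where `T ≠ 0` forces `ψ → 0`. -/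
lemma psi_tendsto_zero {d : ℕ} {C : ℕ → (Fin d → ℝ) → ℝ} {Cinf : (Fin d → ℝ) → ℝ} {φ : ℕ → ℝ}
    {ρφ : ℝ} {S : (Fin d → ℝ) → ℝ} {ψ : ℕ → ℝ} {ρψ : ℝ} {T : (Fin d → ℝ) → ℝ}
    (h3 : ThirdOrderCond C Cinf φ ρφ S ψ ρψ T) : Tendsto ψ atTop (nhds 0) := by
  obtain ⟨⟨hφ, -, -, -, -, h2⟩, hψ, -, -, -, ⟨v, hv, hTv⟩, -, h3⟩ := h3
  have h2v := (h2.tendsto_at hv).sub_const (S v)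
  have h3v := h3.tendsto_at hv
  have h := h2v.div h3v hTv
  rw [sub_self, zero_div] at h
  refine h.congr' ?_
  filter_upwards [h3v.eventually_ne hTv] with k hk
  have h1 := (hφ k).ne'
  have h2 := (hψ k).ne'
  have h4 : C k v - Cinf v - φ k * S v ≠ 0 := fun h0 => hk (by simp [h0])
  simp only [Pi.div_apply]
  field_simp

lemma floor_tendsto {b : ℝ} (hb : 0 < b) :
    Tendsto (fun m : ℕ => ⌊(m : ℝ) * b⌋₊) atTop atTop :=
  tendsto_nat_floor_atTop.comp (tendsto_natCast_atTop_atTop.atTop_mul_const hb)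

lemma RegVar.tendsto' {φ : ℕ → ℝ} {ρ : ℝ} (h : RegVar φ ρ) {b : ℝ} (hb : 0 < b) :
    Tendsto (fun m : ℕ => φ ⌊(m : ℝ) * b⌋₊ / φ m) atTop (nhds (b ^ ρ)) := by
  simpa only [mul_comm] using h b hb

/-- The rounding error in `⌊m b⌋ / m` costs only `O(1 / m)`, so `φ ⌊m b⌋ / φ m` approximates
`b ^ ρ` up to `O(r_b(m) + 1 / m)`. -/
lemma ratio_sub_isBigO (φ : ℕ → ℝ) (ρ : ℝ) {b : ℝ} (hb : 0 < b) :
    (fun m : ℕ => φ ⌊(m : ℝ) * b⌋₊ / φ m - b ^ ρ) =O[atTop]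
      (fun m : ℕ => |raf φ ρ b m| + 1 / (m : ℝ)) := by
  have hfl : (fun m : ℕ => (⌊(m : ℝ) * b⌋₊ : ℝ) / m - b) =O[atTop] (fun m : ℕ => 1 / (m : ℝ)) := by
    refine Asymptotics.IsBigO.of_bound 1 ?_
    filter_upwards [eventually_gt_atTop 0] with m hm
    have hm' : (0 : ℝ) < m := by exact_mod_cast hm
    have h1 := Nat.floor_le (mul_pos hm' hb).le
    have h2 := Nat.lt_floor_add_one ((m : ℝ) * b)
    have e : (⌊(m : ℝ) * b⌋₊ : ℝ) / m - b = (⌊(m : ℝ) * b⌋₊ - m * b) / m := by field_simp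
    rw [e, one_mul, norm_div, norm_div, norm_one, Real.norm_eq_abs]
    gcongr
    rw [abs_le]
    constructor <;> linarith
  have hlim : Tendsto (fun m : ℕ => (⌊(m : ℝ) * b⌋₊ : ℝ) / m) atTop (nhds b) := by
    have := hfl.trans_tendsto tendsto_one_div_atTop_nhds_zero_nat
    simpa using this.add_const b
  have hd : (fun x : ℝ => x ^ ρ - b ^ ρ) =O[nhds b] (fun x => x - b) :=
    (Real.hasDerivAt_rpow_const (p := ρ) (Or.inl hb.ne')).differentiableAt.isBigO_sub
  have h1 := (hd.comp_tendsto hlim).trans hfl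
  have h2 : (fun m : ℕ => 1 / (m : ℝ)) =O[atTop] (fun m : ℕ => |raf φ ρ b m| + 1 / (m : ℝ)) := by
    refine Asymptotics.isBigO_of_le _ fun m => ?_
    rw [Real.norm_of_nonneg (by positivity), Real.norm_of_nonneg (by positivity)]
    linarith [abs_nonneg (raf φ ρ b m)]
  have h3 : (fun m : ℕ => raf φ ρ b m) =O[atTop] (fun m : ℕ => |raf φ ρ b m| + 1 / (m : ℝ)) := by
    refine Asymptotics.isBigO_of_le _ fun m => ?_
    rw [Real.norm_eq_abs, Real.norm_of_nonneg (by positivity)]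
    linarith [show (0 : ℝ) ≤ 1 / (m : ℝ) by positivity]
  refine ((h1.trans h2).sub h3).congr_left fun m => ?_
  simp only [Function.comp_apply, raf]
  ring

/-- Expansion of the normalised increment `(C ⌊m b⌋ u - C m u) / (s * φ m)` around
`φ ⌊m b⌋ / φ m - 1`, with first order coefficient `x`. -/
lemma increment_expansion {d : ℕ} {C : ℕ → (Fin d → ℝ) → ℝ} {Cinf : (Fin d → ℝ) → ℝ} {φ : ℕ → ℝ}
    {ρφ : ℝ} {S : (Fin d → ℝ) → ℝ} {ψ : ℕ → ℝ} {ρψ : ℝ} {T : (Fin d → ℝ) → ℝ}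
    (h3 : ThirdOrderCond C Cinf φ ρφ S ψ ρψ T)
    {u : Fin d → ℝ} (hu : u ∈ unitBox d) (hSu : S u ≠ 0) {b : ℝ} (hb : 0 < b) :
    ∃ x : ℕ → ℝ, Tendsto x atTop (nhds (T u / S u * (b ^ ρφ * b ^ ρψ - 1))) ∧
      ∀ m : ℕ, C ⌊(m : ℝ) * b⌋₊ u - C m u =
        S u * φ m * (φ ⌊(m : ℝ) * b⌋₊ / φ m - 1 + ψ m * x m) := by
  obtain ⟨⟨hφ, -, hφr, -, -, -⟩, hψ, -, hψr, -, -, -, hT⟩ := h3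
  have hτ := hT.tendsto_at hu
  set τ : ℕ → ℝ := fun k => (C k u - Cinf u - φ k * S u) / (φ k * ψ k) with hτdef
  have hC : ∀ k, C k u = Cinf u + φ k * S u + φ k * ψ k * τ k := fun k => by
    have h1 := (hφ k).ne'
    have h2 := (hψ k).ne'
    simp only [hτdef]
    field_simp
    ring
  refine ⟨fun m => (φ ⌊(m : ℝ) * b⌋₊ / φ m * (ψ ⌊(m : ℝ) * b⌋₊ / ψ m) * τ ⌊(m : ℝ) * b⌋₊ - τ m)
    / S u, ?_, fun m => ?_⟩
  · have h := ((((hφr.tendsto' hb).mul (hψr.tendsto' hb)).mul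
      (hτ.comp (floor_tendsto hb))).sub hτ).div_const (S u)
    rwa [show (b ^ ρφ * b ^ ρψ * T u - T u) / S u = T u / S u * (b ^ ρφ * b ^ ρψ - 1) by
      ring] at h
  · rw [hC m, hC ⌊(m : ℝ) * b⌋₊]
    have h1 := (hφ m).ne'
    have h2 := (hψ m).ne'
    field_simp
    ring

/-- The logarithmic expansion, for abstract normalised increments `p i - 1 + ψ * x i`. The sequence
`w` is the factor `(log r / (r - 1)) / (A * y₁ * log a)`, with `r = R / A`. -/
lemma log_expansion {a ρ : ℝ} (ha : 0 < a) (hane : a ≠ 1) (hρ : ρ < 0) {ψ p₁ p₂ x₁ x₂ : ℕ → ℝ}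
    {ξ₁ ξ₂ : ℝ} (hψ : Tendsto ψ atTop (nhds 0))
    (hp₁ : Tendsto p₁ atTop (nhds (a ^ ρ))) (hp₂ : Tendsto p₂ atTop (nhds ((a ^ ρ) ^ 2)))
    (hx₁ : Tendsto x₁ atTop (nhds ξ₁)) (hx₂ : Tendsto x₂ atTop (nhds ξ₂)) :
    (∀ᶠ m in atTop, 0 < (p₂ m - 1 + ψ m * x₂ m) / (p₁ m - 1 + ψ m * x₁ m) - 1) ∧
    ∃ w : ℕ → ℝ, Tendsto w atTop (nhds (1 / (a ^ ρ * (a ^ ρ - 1) * Real.log a))) ∧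
      ∀ᶠ m in atTop,
        Real.logb a ((p₂ m - 1 + ψ m * x₂ m) / (p₁ m - 1 + ψ m * x₁ m) - 1) - ρ =
          ((p₂ m - (a ^ ρ) ^ 2) - (1 + a ^ ρ) * (p₁ m - a ^ ρ)
            + ψ m * (x₂ m - (1 + a ^ ρ) * x₁ m)) * w m := by
  have hlog : Real.log a ≠ 0 := Real.log_ne_zero_of_pos_of_ne_one ha hane
  have hA : 0 < a ^ ρ := Real.rpow_pos_of_pos ha ρ
  have hA1 : a ^ ρ - 1 ≠ 0 := by
    intro h
    have h' := congrArg Real.log (sub_eq_zero.mp h)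
    rw [Real.log_rpow ha, Real.log_one] at h'
    exact mul_ne_zero hρ.ne hlog h'
  have hlA : Real.log (a ^ ρ) = ρ * Real.log a := Real.log_rpow ha ρ
  set A := a ^ ρ
  set y₁ : ℕ → ℝ := fun m => p₁ m - 1 + ψ m * x₁ m with hy₁d
  set y₂ : ℕ → ℝ := fun m => p₂ m - 1 + ψ m * x₂ m with hy₂d
  have hy₁ : Tendsto y₁ atTop (nhds (A - 1)) := by
    simpa using (hp₁.sub_const 1).add (hψ.mul hx₁)
  have hy₂ : Tendsto y₂ atTop (nhds (A ^ 2 - 1)) := by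
    simpa using (hp₂.sub_const 1).add (hψ.mul hx₂)
  have hR : Tendsto (fun m => y₂ m / y₁ m - 1) atTop (nhds A) := by
    have h := (hy₂.div hy₁ hA1).sub_const 1
    rwa [show (A ^ 2 - 1) / (A - 1) - 1 = A by
      rw [sub_eq_iff_eq_add, div_eq_iff hA1]; ring] at h
  have hr : Tendsto (fun m => (y₂ m / y₁ m - 1) / A) atTop (nhds 1) := by
    simpa [hA.ne'] using hR.div_const A
  -- `dslope log 1 r` is `log r / (r - 1)`, extended continuously to `r = 1`.
  have hh : Tendsto (fun m => dslope Real.log 1 ((y₂ m / y₁ m - 1) / A)) atTop (nhds 1) := by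
    have hc : ContinuousAt (dslope Real.log 1) 1 :=
      continuousAt_dslope_same.mpr (Real.differentiableAt_log one_ne_zero)
    have h := hc.tendsto.comp hr
    rwa [dslope_same, Real.deriv_log, inv_one] at h
  refine ⟨hR.eventually_const_lt hA, fun m => dslope Real.log 1 ((y₂ m / y₁ m - 1) / A) /
    (A * y₁ m * Real.log a), ?_, ?_⟩
  · exact hh.div ((hy₁.const_mul A).mul_const _) (mul_ne_zero (mul_ne_zero hA.ne' hA1) hlog)
  · filter_upwards [hR.eventually_const_lt hA, hy₁.eventually_ne hA1] with m hm hm1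
    have hsl := sub_smul_dslope Real.log 1 ((y₂ m / y₁ m - 1) / A)
    rw [Real.log_one, sub_zero, smul_eq_mul, Real.log_div hm.ne' hA.ne', hlA] at hsl
    have e : (p₂ m - A ^ 2) - (1 + A) * (p₁ m - A) + ψ m * (x₂ m - (1 + A) * x₁ m)
        = ((y₂ m / y₁ m - 1) / A - 1) * (A * y₁ m) := by
      have : ((y₂ m / y₁ m - 1) / A - 1) * (A * y₁ m) = y₂ m - (1 + A) * y₁ m := by
        field_simp
        ring
      rw [this]
      simp only [hy₁d, hy₂d]
      ring
    change Real.logb a (y₂ m / y₁ m - 1) - ρ = _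
    rw [e, Real.logb, div_sub' hlog, mul_comm (Real.log a), ← hsl]
    field_simp

/-- deterministic bias expansion of the naive estimator of the second order
parameter `ρ_φ`. -/
theorem statement19 {d : ℕ} (C : ℕ → (Fin d → ℝ) → ℝ) (hcop : ∀ k, IsCopula (C k))
    (Cinf : (Fin d → ℝ) → ℝ) (φ : ℕ → ℝ) (ρφ : ℝ) (S : (Fin d → ℝ) → ℝ)
    (ψ : ℕ → ℝ) (ρψ : ℝ) (T : (Fin d → ℝ) → ℝ)
    (h3 : ThirdOrderCond C Cinf φ ρφ S ψ ρψ T)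
    (u : Fin d → ℝ) (hu : u ∈ unitBox d) (hSu : S u ≠ 0)
    (a : ℝ) (ha : 0 < a) (hane : a ≠ 1) :
    (∃ M : ℕ, ∀ m ≥ M,
      0 < (C ⌊(m:ℝ) * a ^ 2⌋₊ u - C m u) / (C ⌊(m:ℝ) * a⌋₊ u - C m u) - 1) ∧
    ∃ E₁ E₂ : ℕ → ℝ,
      (∃ K : ℝ, ∃ M : ℕ, ∀ m ≥ M,
        |E₁ m| ≤ K * (|raf φ ρφ (a ^ 2) m| + |raf φ ρφ a m| + 1 / (m:ℝ))) ∧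
      Tendsto (fun m => E₂ m / ψ m) atTop (nhds 0) ∧
      (∃ M : ℕ, ∀ m ≥ M,
        Real.logb a
            ((C ⌊(m:ℝ) * a ^ 2⌋₊ u - C m u) / (C ⌊(m:ℝ) * a⌋₊ u - C m u) - 1) - ρφ =
          ψ m * (T u / S u) *
              ((a ^ (ρφ + ρψ) - 1) * (a ^ ρψ - 1)) / ((a ^ ρφ - 1) * Real.log a) +
            E₁ m + E₂ m) := by
  have hψ0 := psi_tendsto_zero h3
  obtain ⟨x₁, hx₁, hC₁⟩ := increment_expansion h3 hu hSu ha
  obtain ⟨x₂, hx₂, hC₂⟩ := increment_expansion h3 hu hSu (pow_pos ha 2)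
  obtain ⟨⟨hφ, hρ, hφr, -, -, -⟩, hψ, -, -, -, -, -, -⟩ := h3
  have hsq : ∀ ρ : ℝ, (a ^ 2) ^ ρ = (a ^ ρ) ^ 2 := fun ρ => by
    rw [← Real.rpow_natCast_mul ha.le, ← Real.rpow_mul_natCast ha.le, mul_comm]
  have hp₂ := hφr.tendsto' (pow_pos ha 2)
  rw [hsq] at hp₂
  obtain ⟨hpos, w, hw, hlog⟩ := log_expansion ha hane hρ hψ0 (hφr.tendsto' ha) hp₂ hx₁ hx₂
  have hA : 0 < a ^ ρφ := Real.rpow_pos_of_pos ha ρφ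
  have hR : ∀ m : ℕ, (C ⌊(m : ℝ) * a ^ 2⌋₊ u - C m u) / (C ⌊(m : ℝ) * a⌋₊ u - C m u) =
      (φ ⌊(m : ℝ) * a ^ 2⌋₊ / φ m - 1 + ψ m * x₂ m) /
        (φ ⌊(m : ℝ) * a⌋₊ / φ m - 1 + ψ m * x₁ m) := fun m => by
    rw [hC₁, hC₂, mul_div_mul_left _ _ (mul_ne_zero hSu (hφ m).ne')]
  simp only [hR]
  refine ⟨eventually_atTop.mp hpos,
    fun m => ((φ ⌊(m : ℝ) * a ^ 2⌋₊ / φ m - (a ^ ρφ) ^ 2)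
      - (1 + a ^ ρφ) * (φ ⌊(m : ℝ) * a⌋₊ / φ m - a ^ ρφ)) * w m,
    fun m => ψ m * ((x₂ m - (1 + a ^ ρφ) * x₁ m) * w m - T u / S u *
      ((a ^ (ρφ + ρψ) - 1) * (a ^ ρψ - 1)) / ((a ^ ρφ - 1) * Real.log a)), ?_, ?_, ?_⟩
  · have h₁ := ratio_sub_isBigO φ ρφ ha
    have h₂ := ratio_sub_isBigO φ ρφ (pow_pos ha 2)
    rw [hsq] at h₂
    have hg₁ : (fun m : ℕ => |raf φ ρφ a m| + 1 / (m : ℝ)) =O[atTop]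
        (fun m : ℕ => |raf φ ρφ (a ^ 2) m| + |raf φ ρφ a m| + 1 / (m : ℝ)) := by
      refine Asymptotics.isBigO_of_le _ fun m => ?_
      rw [Real.norm_of_nonneg (by positivity), Real.norm_of_nonneg (by positivity)]
      linarith [abs_nonneg (raf φ ρφ (a ^ 2) m)]
    have hg₂ : (fun m : ℕ => |raf φ ρφ (a ^ 2) m| + 1 / (m : ℝ)) =O[atTop]
        (fun m : ℕ => |raf φ ρφ (a ^ 2) m| + |raf φ ρφ a m| + 1 / (m : ℝ)) := by
      refine Asymptotics.isBigO_of_le _ fun m => ?_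
      rw [Real.norm_of_nonneg (by positivity), Real.norm_of_nonneg (by positivity)]
      linarith [abs_nonneg (raf φ ρφ a m)]
    have h := ((h₂.trans hg₂).sub ((h₁.trans hg₁).const_mul_left (1 + a ^ ρφ))).mul
      (hw.isBigO_one ℝ)
    obtain ⟨K, hK⟩ := h.bound
    obtain ⟨M, hM⟩ := eventually_atTop.mp hK
    refine ⟨K, M, fun m hm => (hM m hm).trans_eq ?_⟩
    rw [mul_one, Real.norm_of_nonneg (by positivity)]
  · have h := ((hx₂.sub (hx₁.const_mul (1 + a ^ ρφ))).mul hw).sub_const (T u / S u *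
      ((a ^ (ρφ + ρψ) - 1) * (a ^ ρψ - 1)) / ((a ^ ρφ - 1) * Real.log a))
    have h0 : ∀ m, ψ m ≠ 0 := fun m => (hψ m).ne'
    simp only [mul_div_cancel_left₀ _ (h0 _)]
    convert h using 2
    rw [hsq, hsq, Real.rpow_add ha, eq_comm, sub_eq_zero, mul_one_div, mul_assoc (a ^ ρφ),
      ← div_div]
    congr 1
    rw [div_eq_iff hA.ne']
    ring
  · obtain ⟨M, hM⟩ := eventually_atTop.mp hlog
    refine ⟨M, fun m hm => ?_⟩
    rw [hM m hm]
    ring
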